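/- arXiv:2311.06591 — 2 statements merged into one kernel-verified Lean document; each statement's English description precedes it below -/
import Mathlib

section
/- Let h(x,y) = x³ + y³ − x²y² + 9xy − 54. Then for every τ in the complex upper half-plane, h(β(τ), β(2τ)) = 0 and h(α(τ), α(2τ)) = 0. -/
open Complex

/-- The Dedekind eta function `η(τ) = e^{πiτ/12} ∏_{n≥1} (1 - e^{2πinτ})`. -/
noncomputable def dedekindEta (τ : ℂ) : ℂ :=
  Complex.exp (Real.pi * I * τ / 12) *
    ∏' n : ℕ, (1 - Complex.exp (2 * Real.pi * I * (n + 1) * τ))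

/-- `α(τ) = 3 + 27 η(9τ)³/η(τ)³`. -/
noncomputable def alpha (τ : ℂ) : ℂ :=
  3 + 27 * dedekindEta (9 * τ) ^ 3 / dedekindEta τ ^ 3

/-- `β(τ) = 3 + η(τ/3)³/η(3τ)³`. -/
noncomputable def beta (τ : ℂ) : ℂ :=
  3 + dedekindEta (τ / 3) ^ 3 / dedekindEta (3 * τ) ^ 3

/-- The reciprocal of the `q`-Pochhammer symbol `(p; p)_m`, extended by zero to negative `m`. -/
noncomputable def invPochhammer (p : ℂ) (m : ℤ) : ℂ :=
  if m < 0 then 0 else (∏ k ∈ Finset.range m.toNat, (1 - p ^ (k + 1)))⁻¹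

lemma norm_pow_lt_one {q : ℂ} (hq : ‖q‖ < 1) {n : ℕ} (hn : n ≠ 0) : ‖q ^ n‖ < 1 := by
  rw [norm_pow]; exact pow_lt_one₀ (norm_nonneg q) hq hn

lemma one_sub_pow_succ_ne_zero {p : ℂ} (hp : ‖p‖ < 1) (k : ℕ) : 1 - p ^ (k + 1) ≠ 0 := by
  intro h
  have h1 : ‖p ^ (k + 1)‖ = 1 := by rw [← sub_eq_zero.mp h]; simp
  exact (norm_pow_lt_one hp k.succ_ne_zero).ne h1

lemma invPochhammer_sub_one {p : ℂ} (hp : ‖p‖ < 1) (m : ℤ) :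
    invPochhammer p (m - 1) = (1 - p ^ m) * invPochhammer p m := by
  rcases lt_trichotomy m 0 with h | rfl | h
  · simp [invPochhammer, h, show m - 1 < 0 by omega]
  · simp [invPochhammer]
  · obtain ⟨k, rfl⟩ : ∃ k : ℕ, m = k + 1 := ⟨(m - 1).toNat, by omega⟩
    have e : ((k : ℤ) + 1).toNat = k + 1 := by omega
    have := one_sub_pow_succ_ne_zero hp k
    simp only [invPochhammer, show ¬ ((k : ℤ) + 1 < 0) by omega, if_false, e,
      Finset.prod_range_succ, add_sub_cancel_right, Int.toNat_natCast,
      show ¬ ((k : ℤ) < 0) by omega]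
    rw [show p ^ ((k : ℤ) + 1) = p ^ (k + 1) by norm_cast]
    field_simp

/-- The coefficient of `z ^ n` in the finite Jacobi triple product. -/
noncomputable def tripleCoeff (q : ℂ) (N : ℕ) (n : ℤ) : ℂ :=
  (∏ k ∈ Finset.range (2 * N), (1 - (q ^ 2) ^ (k + 1))) *
    invPochhammer (q ^ 2) (N + n) * invPochhammer (q ^ 2) (N - n) * q ^ (n ^ 2)

lemma tripleCoeff_succ {q : ℂ} (hq : ‖q‖ < 1) (hq0 : q ≠ 0) (N : ℕ) (n : ℤ) :
    tripleCoeff q (N + 1) n = (1 + q ^ (4 * N + 2)) * tripleCoeff q N n +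
      q ^ (2 * N + 1) * (tripleCoeff q N (n - 1) + tripleCoeff q N (n + 1)) := by
  have hp := norm_pow_lt_one hq two_ne_zero
  have hp0 : q ^ 2 ≠ 0 := pow_ne_zero 2 hq0
  have a1 := invPochhammer_sub_one hp (N + n + 1)
  have a2 := invPochhammer_sub_one hp (N + n)
  have b1 := invPochhammer_sub_one hp (N - n + 1)
  have b2 := invPochhammer_sub_one hp (N - n)
  simp only [add_sub_cancel_right] at a1 b1
  unfold tripleCoeff
  rw [show 2 * (N + 1) = 2 * N + 1 + 1 by ring, Finset.prod_range_succ, Finset.prod_range_succ]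
  rw [show ((N + 1 : ℕ) : ℤ) + n = N + n + 1 by push_cast; ring,
    show ((N + 1 : ℕ) : ℤ) - n = N - n + 1 by push_cast; ring,
    show (N : ℤ) + (n - 1) = N + n - 1 by ring, show (N : ℤ) - (n - 1) = N - n + 1 by ring,
    show (N : ℤ) + (n + 1) = N + n + 1 by ring, show (N : ℤ) - (n + 1) = N - n - 1 by ring,
    a2, b2, a1, b1]
  have e1 : q ^ ((n - 1) ^ 2) = q ^ (n ^ 2) * q ^ (-2 * n) * q := by
    rw [← zpow_add₀ hq0, ← zpow_add_one₀ hq0]; ring_nf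
  have e2 : q ^ ((n + 1) ^ 2) = q ^ (n ^ 2) * q ^ (2 * n) * q := by
    rw [← zpow_add₀ hq0, ← zpow_add_one₀ hq0]; ring_nf
  have f1 : (q ^ 2) ^ ((N : ℤ) + n) = q ^ (2 * N) * q ^ (2 * n) := by
    rw [← zpow_natCast, ← zpow_natCast, ← zpow_mul, ← zpow_add₀ hq0]; push_cast; ring_nf
  have f2 : (q ^ 2) ^ ((N : ℤ) - n) = q ^ (2 * N) * q ^ (-2 * n) := by
    rw [← zpow_natCast, ← zpow_natCast, ← zpow_mul, ← zpow_add₀ hq0]; push_cast; ring_nf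
  have f3 : q ^ (2 * n) * q ^ (-2 * n) = 1 := by
    rw [← zpow_add₀ hq0]; simp
  rw [zpow_add_one₀ hp0, zpow_add_one₀ hp0, e1, e2, f1, f2]
  generalize q ^ (2 * n) = x at *
  generalize q ^ (-2 * n) = y at *
  obtain rfl : y = x⁻¹ := eq_inv_of_mul_eq_one_right f3
  have hx : x ≠ 0 := by rintro rfl; simp at f3
  simp only [← pow_mul]
  rw [show q ^ (4 * N + 2) = (q ^ (2 * N)) ^ 2 * q ^ 2 by ring,
    show q ^ (2 * N + 1) = q ^ (2 * N) * q by ring,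
    show q ^ (2 * (2 * N + 1)) = (q ^ (2 * N)) ^ 2 * q ^ 2 by ring,
    show q ^ (2 * (2 * N + 1 + 1)) = (q ^ (2 * N)) ^ 2 * q ^ 4 by ring]
  field_simp
  ring

lemma hasSum_finite_triple {q z : ℂ} (hq : ‖q‖ < 1) (hq0 : q ≠ 0) (hz : z ≠ 0) (N : ℕ) :
    HasSum (fun n : ℤ ↦ tripleCoeff q N n * z ^ n)
      (∏ k ∈ Finset.range N, (1 + z * q ^ (2 * k + 1)) * (1 + z⁻¹ * q ^ (2 * k + 1))) := by
  induction N with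
  | zero =>
    convert hasSum_single (0 : ℤ) ?_ using 1
    · simp [tripleCoeff, invPochhammer]
    · intro n hn
      rcases lt_or_gt_of_ne hn with h | h
      · simp [tripleCoeff, invPochhammer, h]
      · simp [tripleCoeff, invPochhammer, h]
  | succ N ih =>
    have h1 := ((Equiv.subRight (1 : ℤ)).hasSum_iff.mpr ih).mul_left (z * q ^ (2 * N + 1))
    have h2 := ((Equiv.addRight (1 : ℤ)).hasSum_iff.mpr ih).mul_left (z⁻¹ * q ^ (2 * N + 1))
    have h := ((ih.mul_left (1 + q ^ (4 * N + 2))).add h1).add h2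
    have hprod (P : ℂ) : P * ((1 + z * q ^ (2 * N + 1)) * (1 + z⁻¹ * q ^ (2 * N + 1))) =
        (1 + q ^ (4 * N + 2)) * P + z * q ^ (2 * N + 1) * P + z⁻¹ * q ^ (2 * N + 1) * P := by
      field_simp
      ring
    rw [Finset.prod_range_succ, hprod]
    convert! h using 2 with n
    simp only [Function.comp, Equiv.subRight_apply, Equiv.coe_addRight]
    rw [tripleCoeff_succ hq hq0, zpow_sub_one₀ hz, zpow_add_one₀ hz]
    field_simp
    ring

lemma tendsto_pochhammer {p : ℂ} (hp : ‖p‖ < 1) :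
    Filter.Tendsto (fun m : ℕ ↦ ∏ k ∈ Finset.range m, (1 - p ^ (k + 1))) Filter.atTop
      (nhds (∏' k : ℕ, (1 - p ^ (k + 1)))) :=
  (ModularForm.multipliable_one_sub_pow hp).tendsto_prod_tprod_nat

lemma tprod_one_sub_pow_ne_zero {p : ℂ} (hp : ‖p‖ < 1) : ∏' k : ℕ, (1 - p ^ (k + 1)) ≠ 0 := by
  simp_rw [sub_eq_add_neg]
  refine tprod_one_add_ne_zero_of_summable (f := fun k : ℕ ↦ -p ^ (k + 1)) ?_ ?_
  · intro k
    simpa [sub_eq_add_neg] using one_sub_pow_succ_ne_zero hp k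
  · simpa using (summable_nat_add_iff 1).mpr (summable_geometric_of_lt_one (norm_nonneg _) hp)

lemma tendsto_invPochhammer {p : ℂ} (hp : ‖p‖ < 1) :
    Filter.Tendsto (invPochhammer p) Filter.atTop (nhds (∏' k : ℕ, (1 - p ^ (k + 1)))⁻¹) := by
  have htop : Filter.Tendsto Int.toNat Filter.atTop Filter.atTop := by
    refine Filter.tendsto_atTop.mpr fun b ↦ ?_
    filter_upwards [Filter.eventually_ge_atTop (b : ℤ)] with m hm
    omega
  have h := ((tendsto_pochhammer hp).inv₀ (tprod_one_sub_pow_ne_zero hp)).comp htop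
  refine h.congr' ?_
  filter_upwards [Filter.eventually_ge_atTop 0] with m hm
  simp [invPochhammer, not_lt.mpr hm]

lemma exists_norm_invPochhammer_le {p : ℂ} (hp : ‖p‖ < 1) :
    ∃ C, ∀ m, ‖invPochhammer p m‖ ≤ C := by
  obtain ⟨C, hC⟩ := (Metric.isBounded_range_of_tendsto _
    ((tendsto_pochhammer hp).inv₀ (tprod_one_sub_pow_ne_zero hp))).exists_norm_le
  refine ⟨C, fun m ↦ ?_⟩
  unfold invPochhammer
  split_ifs
  · simpa using (norm_nonneg _).trans (hC _ ⟨0, rfl⟩)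
  · exact hC _ ⟨m.toNat, rfl⟩

lemma summable_theta {q z : ℂ} (hq : ‖q‖ < 1) (hq0 : q ≠ 0) (hz : z ≠ 0) :
    Summable fun n : ℤ ↦ q ^ (n ^ 2) * z ^ n := by
  have him : 0 < (log q / (Real.pi * I)).im := by
    have : (log q / (Real.pi * I)) = (-(log q * I)) / (Real.pi : ℝ) := by
      field_simp
      linear_combination (log q) * I_sq
    rw [this, div_ofReal_im]
    have : Real.log ‖q‖ < 0 := Real.log_neg (norm_pos_iff.mpr hq0) hq
    apply div_pos _ Real.pi_pos
    simpa [log_re] using this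
  have := (summable_jacobiTheta₂_term_iff (log z / (2 * Real.pi * I)) _).mpr him
  refine this.congr fun n ↦ ?_
  unfold jacobiTheta₂_term
  rw [exp_add, mul_comm]
  congr 1
  · rw [show Real.pi * I * (n : ℂ) ^ 2 * (log q / (Real.pi * I)) = ((n ^ 2 : ℤ) : ℂ) * log q by
      push_cast; field_simp, exp_int_mul, exp_log hq0]
  · rw [show 2 * Real.pi * I * (n : ℂ) * (log z / (2 * Real.pi * I)) = (n : ℂ) * log z by
      field_simp, exp_int_mul, exp_log hz]

lemma multipliable_one_add_mul_pow {q : ℂ} (hq : ‖q‖ < 1) (z : ℂ) (a b : ℕ) (ha : a ≠ 0) :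
    Multipliable fun k : ℕ ↦ 1 + z * q ^ (a * k + b) := by
  apply multipliable_one_add_of_summable
  simp only [norm_mul, norm_pow, pow_add, pow_mul]
  exact ((summable_geometric_of_lt_one (by positivity)
    (pow_lt_one₀ (norm_nonneg q) hq ha)).mul_right _).mul_left _

/-- The Jacobi triple product identity. -/
theorem jacobi_triple_product {q z : ℂ} (hq : ‖q‖ < 1) (hq0 : q ≠ 0) (hz : z ≠ 0) :
    ∑' n : ℤ, q ^ (n ^ 2) * z ^ n = (∏' k : ℕ, (1 - (q ^ 2) ^ (k + 1))) *
      ((∏' k : ℕ, (1 + z * q ^ (2 * k + 1))) * ∏' k : ℕ, (1 + z⁻¹ * q ^ (2 * k + 1))) := by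
  have hp := norm_pow_lt_one hq two_ne_zero
  have hP := tprod_one_sub_pow_ne_zero hp
  have hprod : Filter.Tendsto (fun N : ℕ ↦ ∑' n : ℤ, tripleCoeff q N n * z ^ n) Filter.atTop
      (nhds ((∏' k : ℕ, (1 + z * q ^ (2 * k + 1))) * ∏' k : ℕ, (1 + z⁻¹ * q ^ (2 * k + 1)))) := by
    simp_rw [(hasSum_finite_triple hq hq0 hz _).tsum_eq, Finset.prod_mul_distrib]
    exact (multipliable_one_add_mul_pow hq _ _ _ two_ne_zero).tendsto_prod_tprod_nat.mul
      (multipliable_one_add_mul_pow hq _ _ _ two_ne_zero).tendsto_prod_tprod_nat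
  obtain ⟨C, hC⟩ := exists_norm_invPochhammer_le hp
  obtain ⟨D, hD⟩ := (Metric.isBounded_range_of_tendsto _ (tendsto_pochhammer hp)).exists_norm_le
  have hC0 : 0 ≤ C := (norm_nonneg _).trans (hC 0)
  have hD0 : 0 ≤ D := (norm_nonneg _).trans (hD _ ⟨0, rfl⟩)
  have hsum : Filter.Tendsto (fun N : ℕ ↦ ∑' n : ℤ, tripleCoeff q N n * z ^ n) Filter.atTop
      (nhds (∑' n : ℤ, (∏' k : ℕ, (1 - (q ^ 2) ^ (k + 1)))⁻¹ * (q ^ (n ^ 2) * z ^ n))) := by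
    refine tendsto_tsum_of_dominated_convergence
      (bound := fun n : ℤ ↦ D * C * C * ‖q ^ (n ^ 2) * z ^ n‖)
      ((summable_theta hq hq0 hz).norm.mul_left _) (fun n ↦ ?_) (.of_forall fun N n ↦ ?_)
    · have h1 : Filter.Tendsto (fun N : ℕ ↦ (N : ℤ) + n) Filter.atTop Filter.atTop :=
        Filter.tendsto_atTop_add_const_right _ _ tendsto_natCast_atTop_atTop
      have h2 : Filter.Tendsto (fun N : ℕ ↦ (N : ℤ) - n) Filter.atTop Filter.atTop :=
        Filter.tendsto_atTop_add_const_right _ _ tendsto_natCast_atTop_atTop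
      have h3 : Filter.Tendsto (fun N : ℕ ↦ 2 * N) Filter.atTop Filter.atTop :=
        Filter.tendsto_id.const_mul_atTop' two_pos
      have := (((((tendsto_pochhammer hp).comp h3).mul ((tendsto_invPochhammer hp).comp h1)).mul
        ((tendsto_invPochhammer hp).comp h2)).mul_const (q ^ (n ^ 2))).mul_const (z ^ n)
      rw [mul_inv_cancel₀ hP, one_mul, mul_assoc] at this
      exact this
    · unfold tripleCoeff
      rw [mul_assoc, norm_mul, norm_mul, norm_mul]
      gcongr
      · exact hD _ ⟨2 * N, rfl⟩
      · exact hC _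
      · exact hC _
  have := tendsto_nhds_unique hsum hprod
  rw [tsum_mul_left] at this
  rw [← this]
  field_simp

lemma tsum_int_mod_three {f : ℤ → ℂ} (hf : Summable f) :
    ∑' n, f n = ∑' m, f (3 * m) + ∑' m, f (3 * m + 1) + ∑' m, f (-(3 * m) - 1) := by
  have hs (c : ℤ) : Summable fun m : ℤ ↦ f (3 * m + c) :=
    hf.comp_injective fun a b (h : 3 * a + c = 3 * b + c) ↦ by omega
  have h2 : ∑' m, f (-(3 * m) - 1) = ∑' m : ℤ, f (3 * m + 2) := by
    rw [← (Equiv.subLeft (-1 : ℤ)).tsum_eq]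
    refine tsum_congr fun m ↦ ?_
    rw [Equiv.subLeft_apply]
    congr 1
    ring
  have e := (Int.divModEquiv 3).symm.summable_iff.mpr hf
  have h0 := hs 0
  simp only [add_zero] at h0
  have e' : ∑' c, f ((Int.divModEquiv 3).symm c) = _ := e.tsum_prod
  rw [h2, ← (Int.divModEquiv 3).symm.tsum_eq, e', ← h0.tsum_add (hs 1),
    ← (h0.add (hs 1)).tsum_add (hs 2)]
  refine tsum_congr fun m ↦ ?_
  simp [tsum_fintype, Fin.sum_univ_three, Int.divModEquiv, mul_comm]

/-- The infinite product `∏_{k ≥ 0} (1 + z q^{ak + b})`. -/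
noncomputable def qProd (z q : ℂ) (a b : ℕ) : ℂ := ∏' k : ℕ, (1 + z * q ^ (a * k + b))

/-- Euler's product `∏_{k ≥ 1} (1 - q^k)`. -/
noncomputable def eulerProd (q : ℂ) : ℂ := ∏' k : ℕ, (1 - q ^ (k + 1))

lemma eulerProd_pow (q : ℂ) (a : ℕ) : eulerProd (q ^ a) = qProd (-1) q a a := by
  unfold eulerProd qProd
  refine tprod_congr fun k ↦ ?_
  rw [← pow_mul, mul_add_one]
  ring

lemma eulerProd_eq (q : ℂ) : eulerProd q = qProd (-1) q 1 1 := by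
  rw [← eulerProd_pow, pow_one]

lemma qProd_split_two {q : ℂ} (hq : ‖q‖ < 1) (z : ℂ) {a : ℕ} (b : ℕ) (ha : a ≠ 0) :
    qProd z q a b = qProd z q (2 * a) b * qProd z q (2 * a) (a + b) := by
  have h := multipliable_one_add_mul_pow hq z a b ha
  have h0 := multipliable_one_add_mul_pow hq z (2 * a) b (by positivity)
  have h1 := multipliable_one_add_mul_pow hq z (2 * a) (a + b) (by positivity)
  unfold qProd
  rw [← h0.tprod_mul h1]
  refine tendsto_nhds_unique (h.tendsto_prod_tprod_nat.comp
    (Filter.tendsto_id.const_mul_atTop' two_pos)) ?_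
  refine (h0.mul h1).tendsto_prod_tprod_nat.congr fun N ↦ ?_
  simp only [Function.comp, id]
  induction N with
  | zero => simp
  | succ N ih =>
    rw [Finset.prod_range_succ, ih, show 2 * (N + 1) = 2 * N + 1 + 1 by ring,
      Finset.prod_range_succ, Finset.prod_range_succ]
    ring_nf

lemma qProd_split_three {q : ℂ} (hq : ‖q‖ < 1) (z : ℂ) {a : ℕ} (b : ℕ) (ha : a ≠ 0) :
    qProd z q a b =
      qProd z q (3 * a) b * qProd z q (3 * a) (a + b) * qProd z q (3 * a) (2 * a + b) := by
  have h := multipliable_one_add_mul_pow hq z a b ha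
  have h0 := multipliable_one_add_mul_pow hq z (3 * a) b (by positivity)
  have h1 := multipliable_one_add_mul_pow hq z (3 * a) (a + b) (by positivity)
  have h2 := multipliable_one_add_mul_pow hq z (3 * a) (2 * a + b) (by positivity)
  unfold qProd
  rw [← h0.tprod_mul h1, ← (h0.mul h1).tprod_mul h2]
  refine tendsto_nhds_unique (h.tendsto_prod_tprod_nat.comp
    (Filter.tendsto_id.const_mul_atTop' three_pos)) ?_
  refine ((h0.mul h1).mul h2).tendsto_prod_tprod_nat.congr fun N ↦ ?_
  simp only [Function.comp, id]
  induction N with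
  | zero => simp
  | succ N ih =>
    rw [Finset.prod_range_succ, ih, show 3 * (N + 1) = 3 * N + 1 + 1 + 1 by ring,
      Finset.prod_range_succ, Finset.prod_range_succ, Finset.prod_range_succ]
    ring_nf

lemma qProd_one_mul_neg_one {q : ℂ} (hq : ‖q‖ < 1) {a : ℕ} (b : ℕ) (ha : a ≠ 0) :
    qProd 1 q a b * qProd (-1) q a b = qProd (-1) q (2 * a) (2 * b) := by
  unfold qProd
  rw [← (multipliable_one_add_mul_pow hq 1 a b ha).tprod_mul
    (multipliable_one_add_mul_pow hq (-1) a b ha)]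
  exact tprod_congr fun k ↦ by ring

lemma qProd_zero_right {q : ℂ} (hq : ‖q‖ < 1) (z : ℂ) {a : ℕ} (ha : a ≠ 0) :
    qProd z q a 0 = (1 + z) * qProd z q a a := by
  have h : Multipliable fun k : ℕ ↦ 1 + z * q ^ (a * (k + 1)) := by
    simpa only [mul_add_one] using multipliable_one_add_mul_pow hq z a a ha
  simp only [qProd, add_zero]
  rw [tprod_eq_zero_mul' (f := fun k : ℕ ↦ 1 + z * q ^ (a * k)) h]
  simp [mul_add_one]

/-- The two-variable theta series `∑_{n ∈ ℤ} q^{n²} z^n`. -/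
noncomputable def thetaSeries (q z : ℂ) : ℂ := ∑' n : ℤ, q ^ (n ^ 2) * z ^ n

lemma eulerProd_ne_zero {q : ℂ} (hq : ‖q‖ < 1) : eulerProd q ≠ 0 := tprod_one_sub_pow_ne_zero hq

lemma thetaSeries_neg_one {q : ℂ} (hq : ‖q‖ < 1) (hq0 : q ≠ 0) :
    thetaSeries q (-1) * eulerProd (q ^ 2) = eulerProd q ^ 2 := by
  have h : thetaSeries q (-1) = eulerProd (q ^ 2) * (qProd (-1) q 2 1 * qProd (-1) q 2 1) := by
    rw [thetaSeries, jacobi_triple_product hq hq0 (by simp)]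
    norm_num [qProd, eulerProd]
  rw [h, eulerProd_eq q, qProd_split_two hq _ _ one_ne_zero, mul_one, one_add_one_eq_two,
    eulerProd_pow]
  ring

lemma thetaSeries_self {r : ℂ} (hr : ‖r‖ < 1) (hr0 : r ≠ 0) :
    thetaSeries r r * eulerProd (r ^ 2) = 2 * eulerProd ((r ^ 2) ^ 2) ^ 2 := by
  have hq := norm_pow_lt_one hr two_ne_zero
  have h : thetaSeries r r =
      eulerProd (r ^ 2) * (qProd 1 (r ^ 2) 1 1 * qProd 1 (r ^ 2) 1 0) := by
    rw [thetaSeries, jacobi_triple_product hr hr0 hr0]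
    unfold qProd eulerProd
    congr 2
    · exact tprod_congr fun k ↦ by ring
    · refine tprod_congr fun k ↦ ?_
      rw [show r ^ (2 * k + 1) = r * (r ^ 2) ^ (1 * k + 0) by ring, inv_mul_cancel_left₀ hr0]
      simp
  have h2 := qProd_one_mul_neg_one hq 1 one_ne_zero
  rw [mul_one, ← eulerProd_eq, ← eulerProd_pow] at h2
  rw [h, qProd_zero_right hq _ one_ne_zero, ← h2]
  ring

lemma thetaSeries_pow_nine_neg_pow_six {q : ℂ} (hq : ‖q‖ < 1) (hq0 : q ≠ 0) :
    thetaSeries (q ^ 9) (-q ^ 6) * eulerProd (q ^ 6) * eulerProd (q ^ 9) =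
      eulerProd (q ^ 3) * eulerProd (q ^ 18) ^ 2 := by
  have h : thetaSeries (q ^ 9) (-q ^ 6) =
      eulerProd (q ^ 18) * (qProd (-1) q 18 15 * qProd (-1) q 18 3) := by
    rw [thetaSeries, jacobi_triple_product (norm_pow_lt_one hq (by simp)) (by simpa) (by simpa)]
    unfold qProd eulerProd
    congr 1
    · exact tprod_congr fun k ↦ by ring
    congr 1
    · exact tprod_congr fun k ↦ by ring
    · refine tprod_congr fun k ↦ ?_
      rw [show (q ^ 9) ^ (2 * k + 1) = q ^ 6 * q ^ (18 * k + 3) by ring]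
      field_simp
  have h1 := qProd_split_two hq (-1) 3 three_ne_zero
  have h2 := qProd_split_three hq (-1) 3 (a := 6) (by simp)
  have h3 := qProd_split_two hq (-1) 9 (a := 9) (by simp)
  norm_num at h1 h2 h3
  simp only [h, eulerProd_pow, h1, h2, h3]
  ring

lemma thetaSeries_pow_nine_pow_three {r : ℂ} (hr : ‖r‖ < 1) (hr0 : r ≠ 0) :
    thetaSeries (r ^ 9) (r ^ 3) * eulerProd ((r ^ 2) ^ 18) * eulerProd ((r ^ 2) ^ 3) =
      eulerProd ((r ^ 2) ^ 9) ^ 2 * eulerProd ((r ^ 2) ^ 6) := by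
  have hq := norm_pow_lt_one hr two_ne_zero
  have h : thetaSeries (r ^ 9) (r ^ 3) =
      eulerProd ((r ^ 2) ^ 9) * (qProd 1 (r ^ 2) 9 6 * qProd 1 (r ^ 2) 9 3) := by
    rw [thetaSeries, jacobi_triple_product (norm_pow_lt_one hr (by simp)) (by simpa) (by simpa)]
    unfold qProd eulerProd
    congr 1
    · exact tprod_congr fun k ↦ by ring
    congr 1
    · exact tprod_congr fun k ↦ by ring
    · refine tprod_congr fun k ↦ ?_
      rw [show (r ^ 9) ^ (2 * k + 1) = r ^ 3 * (r ^ 2) ^ (9 * k + 3) by ring]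
      field_simp
  have h1 := qProd_split_three hq 1 3 three_ne_zero
  have h2 := qProd_one_mul_neg_one hq 3 three_ne_zero
  have h3 := qProd_one_mul_neg_one hq 9 (a := 9) (by simp)
  norm_num at h1 h2 h3
  simp only [h, eulerProd_pow, ← h2, ← h3, h1]
  ring

lemma thetaSeries_neg_one_dissection {q : ℂ} (hq : ‖q‖ < 1) (hq0 : q ≠ 0) :
    thetaSeries q (-1) = thetaSeries (q ^ 9) (-1) - 2 * q * thetaSeries (q ^ 9) (-q ^ 6) := by
  have key (m : ℤ) : q ^ ((3 * m + 1) ^ 2) * (-1) ^ (3 * m + 1) =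
      -q * ((q ^ 9) ^ (m ^ 2) * (-q ^ 6) ^ m) := by
    have e1 : q ^ ((3 * m + 1) ^ 2) = q * ((q ^ 9) ^ (m ^ 2) * (q ^ 6) ^ m) := by
      rw [← zpow_natCast, ← zpow_natCast, ← zpow_mul, ← zpow_mul, ← zpow_add₀ hq0,
        ← zpow_one_add₀ hq0]
      congr 1; push_cast; ring
    rw [e1, zpow_add_one₀ (by simp), zpow_mul,
      show -q ^ 6 = -1 * q ^ 6 by ring, mul_zpow]
    norm_num
    ring
  unfold thetaSeries
  rw [tsum_int_mod_three (summable_theta hq hq0 (by simp))]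
  have h0 : ∑' m : ℤ, q ^ ((3 * m) ^ 2) * (-1 : ℂ) ^ (3 * m) =
      ∑' m : ℤ, (q ^ 9) ^ (m ^ 2) * (-1) ^ m := by
    refine tsum_congr fun m ↦ ?_
    have e1 : q ^ ((3 * m) ^ 2) = (q ^ 9) ^ (m ^ 2) := by
      rw [← zpow_natCast q 9, ← zpow_mul]; congr 1; push_cast; ring
    have e2 : (-1 : ℂ) ^ (3 * m) = (-1) ^ m := by rw [zpow_mul]; norm_num
    rw [e1, e2]
  have h2 : ∑' m : ℤ, q ^ ((-(3 * m) - 1) ^ 2) * (-1 : ℂ) ^ (-(3 * m) - 1) =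
      ∑' m : ℤ, q ^ ((3 * m + 1) ^ 2) * (-1) ^ (3 * m + 1) := by
    refine tsum_congr fun m ↦ ?_
    rw [show -(3 * m) - 1 = -(3 * m + 1) by ring, neg_sq, zpow_neg, ← inv_zpow, inv_neg, inv_one]
  rw [h0, h2]
  simp_rw [key]
  rw [tsum_mul_left]
  ring

lemma thetaSeries_self_dissection {r : ℂ} (hr : ‖r‖ < 1) (hr0 : r ≠ 0) :
    thetaSeries r r =
      2 * thetaSeries (r ^ 9) (r ^ 3) + r ^ 2 * thetaSeries (r ^ 9) (r ^ 9) := by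
  have key (a b : ℤ) (c d : ℕ) : (r ^ c) ^ a * (r ^ d) ^ b = r ^ (c * a + d * b) := by
    rw [← zpow_natCast, ← zpow_natCast, ← zpow_mul, ← zpow_mul, ← zpow_add₀ hr0]
  have h0 (m : ℤ) : r ^ ((3 * m) ^ 2) * r ^ (3 * m) = (r ^ 9) ^ (m ^ 2) * (r ^ 3) ^ m := by
    rw [key, ← zpow_add₀ hr0]; congr 1; push_cast; ring
  have h1 (m : ℤ) : r ^ ((3 * m + 1) ^ 2) * r ^ (3 * m + 1) =
      r ^ 2 * ((r ^ 9) ^ (m ^ 2) * (r ^ 9) ^ m) := by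
    rw [key, ← zpow_add₀ hr0, ← zpow_natCast r 2, ← zpow_add₀ hr0]; congr 1; push_cast; ring
  have h2 (m : ℤ) : r ^ ((-(3 * m) - 1) ^ 2) * r ^ (-(3 * m) - 1) =
      (r ^ 9) ^ (m ^ 2) * (r ^ 3) ^ m := by
    rw [key, ← zpow_add₀ hr0]; congr 1; push_cast; ring
  unfold thetaSeries
  rw [tsum_int_mod_three (summable_theta hr hr0 hr0)]
  simp_rw [h0, h1, h2]
  rw [tsum_mul_left]
  ring

lemma exists_param {r : ℂ} (hr : ‖r‖ < 1) (hr0 : r ≠ 0) :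
    ∃ t : ℂ, t ≠ 0 ∧
      eulerProd (r ^ 2) ^ 3 / (r ^ 2 * eulerProd ((r ^ 2) ^ 9) ^ 3) =
        (t - 2) ^ 2 * (t + 1) / t ^ 2 ∧
      eulerProd ((r ^ 2) ^ 2) ^ 3 / ((r ^ 2) ^ 2 * eulerProd ((r ^ 2) ^ 18) ^ 3) =
        (t - 2) * (t + 1) ^ 2 / t := by
  have hq := norm_pow_lt_one hr two_ne_zero
  have hq0 : r ^ 2 ≠ 0 := pow_ne_zero 2 hr0
  have hr9 := norm_pow_lt_one hr (n := 9) (by simp)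
  have hq9 := norm_pow_lt_one hq (n := 9) (by simp)
  have p1 := thetaSeries_neg_one hq hq0
  have p9 := thetaSeries_neg_one hq9 (pow_ne_zero 9 hq0)
  have po := thetaSeries_pow_nine_neg_pow_six hq hq0
  have pd := thetaSeries_neg_one_dissection hq hq0
  have s1 := thetaSeries_self hr hr0
  have s9 := thetaSeries_self hr9 (pow_ne_zero 9 hr0)
  have so := thetaSeries_pow_nine_pow_three hr hr0
  have sd := thetaSeries_self_dissection hr hr0
  rw [show (r ^ 9) ^ 2 = (r ^ 2) ^ 9 by ring, show ((r ^ 2) ^ 9) ^ 2 = (r ^ 2) ^ 18 by ring] at s9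
  rw [show ((r ^ 2) ^ 9) ^ 2 = (r ^ 2) ^ 18 by ring] at p9
  have n1 := eulerProd_ne_zero hq
  have n2 := eulerProd_ne_zero (norm_pow_lt_one hq (n := 2) (by simp))
  have n3 := eulerProd_ne_zero (norm_pow_lt_one hq (n := 3) (by simp))
  have n6 := eulerProd_ne_zero (norm_pow_lt_one hq (n := 6) (by simp))
  have n9 := eulerProd_ne_zero hq9
  have n18 := eulerProd_ne_zero (norm_pow_lt_one hq (n := 18) (by simp))
  rw [← eq_div_iff (by assumption)] at p1 p9 s1 s9
  rw [mul_assoc, ← eq_div_iff (by positivity)] at po so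
  rw [p1, p9, po] at pd
  rw [s1, s9, so] at sd
  generalize eulerProd (r ^ 2) = E1 at *
  generalize eulerProd ((r ^ 2) ^ 2) = E2 at *
  generalize eulerProd ((r ^ 2) ^ 3) = E3 at *
  generalize eulerProd ((r ^ 2) ^ 6) = E6 at *
  generalize eulerProd ((r ^ 2) ^ 9) = E9 at *
  generalize eulerProd ((r ^ 2) ^ 18) = E18 at *
  generalize r ^ 2 = q at *
  obtain ⟨t, ht⟩ : ∃ t, t = E6 * E9 ^ 3 / (q * E3 * E18 ^ 3) := ⟨_, rfl⟩
  have ht0 : t ≠ 0 := by rw [ht]; positivity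
  have hp : E1 ^ 2 / E2 = E9 ^ 2 / E18 * ((t - 2) / t) := by
    rw [pd, ht]; field_simp
  have hs : E2 ^ 2 / E1 = q * E18 ^ 2 / E9 * (t + 1) := by
    have : E2 ^ 2 / E1 = 2 * E2 ^ 2 / E1 / 2 := by ring
    rw [this, sd, ht]; field_simp
  refine ⟨t, ht0, ?_, ?_⟩
  · rw [show E1 ^ 3 = (E1 ^ 2 / E2) ^ 2 * (E2 ^ 2 / E1) by field_simp, hp, hs]
    field_simp
  · rw [show E2 ^ 3 = (E1 ^ 2 / E2) * (E2 ^ 2 / E1) ^ 2 by field_simp, hp, hs]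
    field_simp

lemma dedekindEta_eq (τ : ℂ) :
    dedekindEta τ = exp (Real.pi * I * τ / 12) * eulerProd (exp (2 * Real.pi * I * τ)) := by
  unfold dedekindEta eulerProd
  congr 1
  refine tprod_congr fun k ↦ ?_
  rw [← exp_nat_mul]
  congr 2
  push_cast; ring

lemma dedekindEta_cube_div (τ : ℂ) :
    dedekindEta τ ^ 3 / dedekindEta (9 * τ) ^ 3 =
      eulerProd (exp (Real.pi * I * τ) ^ 2) ^ 3 /
        (exp (Real.pi * I * τ) ^ 2 * eulerProd ((exp (Real.pi * I * τ) ^ 2) ^ 9) ^ 3) := by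
  have h1 : exp (2 * Real.pi * I * τ) = exp (Real.pi * I * τ) ^ 2 := by
    rw [← exp_nat_mul]; congr 1; push_cast; ring
  have h9 : exp (2 * Real.pi * I * (9 * τ)) = (exp (Real.pi * I * τ) ^ 2) ^ 9 := by
    rw [← exp_nat_mul, ← exp_nat_mul]; congr 1; push_cast; ring
  have e : exp (Real.pi * I * (9 * τ) / 12) ^ 3 =
      exp (Real.pi * I * τ / 12) ^ 3 * exp (Real.pi * I * τ) ^ 2 := by
    rw [← exp_nat_mul, ← exp_nat_mul, ← exp_nat_mul, ← exp_add]; congr 1; push_cast; ring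
  rw [dedekindEta_eq, dedekindEta_eq, h1, h9, mul_pow, mul_pow, e,
    mul_assoc (exp (Real.pi * I * τ / 12) ^ 3),
    mul_div_mul_left _ _ (pow_ne_zero 3 (exp_ne_zero _))]

lemma dedekindEta_ne_zero {τ : ℂ} (hτ : 0 < τ.im) : dedekindEta τ ≠ 0 := by
  rw [dedekindEta_eq]
  exact mul_ne_zero (exp_ne_zero _)
    (eulerProd_ne_zero (UpperHalfPlane.norm_exp_two_pi_I_lt_one ⟨τ, hτ⟩))

lemma exists_param_dedekindEta {τ : ℂ} (hτ : 0 < τ.im) :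
    ∃ t : ℂ, t ≠ 0 ∧
      dedekindEta τ ^ 3 / dedekindEta (9 * τ) ^ 3 = (t - 2) ^ 2 * (t + 1) / t ^ 2 ∧
      dedekindEta (2 * τ) ^ 3 / dedekindEta (9 * (2 * τ)) ^ 3 = (t - 2) * (t + 1) ^ 2 / t := by
  have hr : ‖exp (Real.pi * I * τ)‖ < 1 := by
    rw [norm_exp]
    simpa using mul_pos Real.pi_pos hτ
  have h2 : exp (Real.pi * I * (2 * τ)) = exp (Real.pi * I * τ) ^ 2 := by
    rw [← exp_nat_mul]; congr 1; push_cast; ring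
  rw [dedekindEta_cube_div, dedekindEta_cube_div, h2]
  have := exists_param hr (exp_ne_zero _)
  rwa [show (exp (Real.pi * I * τ) ^ 2) ^ 18 = ((exp (Real.pi * I * τ) ^ 2) ^ 2) ^ 9 by ring]
    at this

/-- With `h(x,y) = x³ + y³ − x²y² + 9xy − 54`, for every `τ` in the upper half-plane
`h(β(τ), β(2τ)) = 0` and `h(α(τ), α(2τ)) = 0`. -/
theorem alpha_beta_duplication (τ : ℂ) (hτ : 0 < τ.im) :
    (beta τ ^ 3 + beta (2 * τ) ^ 3 - beta τ ^ 2 * beta (2 * τ) ^ 2 +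
      9 * beta τ * beta (2 * τ) - 54 = 0) ∧
    (alpha τ ^ 3 + alpha (2 * τ) ^ 3 - alpha τ ^ 2 * alpha (2 * τ) ^ 2 +
      9 * alpha τ * alpha (2 * τ) - 54 = 0) := by
  constructor
  · obtain ⟨t, ht, h1, h2⟩ := exists_param_dedekindEta (τ := τ / 3) (by simpa using hτ)
    rw [show 9 * (τ / 3) = 3 * τ by ring] at h1
    rw [show 2 * (τ / 3) = 2 * τ / 3 by ring, show 9 * (2 * τ / 3) = 3 * (2 * τ) by ring] at h2
    rw [beta, beta, h1, h2]
    field_simp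
    ring
  · obtain ⟨t, ht, h1, h2⟩ := exists_param_dedekindEta hτ
    have hw : dedekindEta τ ^ 3 / dedekindEta (9 * τ) ^ 3 ≠ 0 :=
      div_ne_zero (pow_ne_zero 3 (dedekindEta_ne_zero hτ))
        (pow_ne_zero 3 (dedekindEta_ne_zero (by simpa using hτ)))
    obtain ⟨hm, hp⟩ : t - 2 ≠ 0 ∧ t + 1 ≠ 0 := by
      rw [h1] at hw
      constructor <;> intro h <;> simp [h] at hw
    have a1 : alpha τ = 3 + 27 / ((t - 2) ^ 2 * (t + 1) / t ^ 2) := by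
      rw [← h1, alpha]; simp [div_eq_mul_inv, mul_assoc]
    have a2 : alpha (2 * τ) = 3 + 27 / ((t - 2) * (t + 1) ^ 2 / t) := by
      rw [← h2, alpha]; simp [div_eq_mul_inv, mul_assoc]
    rw [a1, a2]
    field_simp
    ring
end

section
/- For every τ in the complex upper half-plane: (a) c(τ) + c₁(τ) + 2·c(τ)²·c₁(τ)² = 0; (b) 2·c(τ)²·c₁(τ/2) + c₁(τ/2)² − c(τ) = 0; moreover c(τ)·c₁(τ) = −c(2τ). -/
open Complex

/-- The nome `q = exp(2πiτ)`. -/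
noncomputable def nome (τ : ℂ) : ℂ := Complex.exp (2 * Real.pi * I * τ)

/-- Ramanujan's cubic continued fraction, as an infinite product:
`c(τ) = q^{1/3} ∏_{n≥1} (1-q^{6n-1})(1-q^{6n-5})/(1-q^{6n-3})²`. -/
noncomputable def c (τ : ℂ) : ℂ :=
  Complex.exp (2 * Real.pi * I * τ / 3) *
    ∏' n : ℕ,
      ((1 - nome τ ^ (6 * (n + 1) - 1)) * (1 - nome τ ^ (6 * (n + 1) - 5)) /
        (1 - nome τ ^ (6 * (n + 1) - 3)) ^ 2)

/-- `c₁(τ) = c(τ + 3/2)`. -/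
noncomputable def c₁ (τ : ℂ) : ℂ := c (τ + 3 / 2)

open Filter Topology

/-- The finite product `∏_{j<n} (1 - x^{2j+2})`. -/
noncomputable def evenPoch (x : ℂ) (n : ℕ) : ℂ := ∏ j ∈ Finset.range n, (1 - x ^ (2 * (j + 1)))

/-- The infinite product `∏_{j≥0} (1 - x^{2j+2})`. -/
noncomputable def evenProd (x : ℂ) : ℂ := ∏' j : ℕ, (1 - x ^ (2 * (j + 1)))

/-- The infinite product `∏_{j≥0} (1 + z x^{2j+1})`. -/
noncomputable def oddProd (x z : ℂ) : ℂ := ∏' j : ℕ, (1 + z * x ^ (2 * j + 1))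

/-- The reciprocal of `evenPoch`, extended by zero to negative indices. -/
noncomputable def evenPochInv (x : ℂ) (n : ℤ) : ℂ := if 0 ≤ n then (evenPoch x n.toNat)⁻¹ else 0

section Products

variable {x : ℂ}

lemma one_sub_pow_ne_zero_of_norm_lt_one (hx : ‖x‖ < 1) {n : ℕ} (hn : n ≠ 0) :
    1 - x ^ n ≠ 0 := by
  intro h
  have h1 : x ^ n = 1 := (sub_eq_zero.mp h).symm
  have h2 : ‖x‖ ^ n < 1 := pow_lt_one₀ (norm_nonneg x) hx hn
  rw [← norm_pow, h1, norm_one] at h2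
  exact lt_irrefl _ h2

lemma summable_norm_odd_pow (hx : ‖x‖ < 1) (z : ℂ) :
    Summable fun j : ℕ ↦ ‖z * x ^ (2 * j + 1)‖ := by
  have h2 : ‖x‖ ^ 2 < 1 := pow_lt_one₀ (norm_nonneg x) hx two_ne_zero
  refine ((summable_geometric_of_lt_one (by positivity) h2).mul_left (‖z‖ * ‖x‖)).congr ?_
  intro j
  rw [norm_mul, norm_pow, ← pow_mul]
  ring

lemma multipliable_oddProd (hx : ‖x‖ < 1) (z : ℂ) :
    Multipliable fun j : ℕ ↦ 1 + z * x ^ (2 * j + 1) :=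
  multipliable_one_add_of_summable (summable_norm_odd_pow hx z)

lemma summable_norm_even_pow (hx : ‖x‖ < 1) :
    Summable fun j : ℕ ↦ ‖-x ^ (2 * (j + 1))‖ := by
  refine (summable_norm_odd_pow hx x).congr fun j ↦ ?_
  rw [norm_neg]
  ring_nf

lemma multipliable_evenProd (hx : ‖x‖ < 1) :
    Multipliable fun j : ℕ ↦ 1 - x ^ (2 * (j + 1)) := by
  simpa [sub_eq_add_neg] using multipliable_one_add_of_summable (summable_norm_even_pow hx)

lemma evenPoch_ne_zero (hx : ‖x‖ < 1) (n : ℕ) : evenPoch x n ≠ 0 :=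
  Finset.prod_ne_zero_iff.mpr fun _ _ ↦ one_sub_pow_ne_zero_of_norm_lt_one hx (by omega)

lemma evenProd_ne_zero (hx : ‖x‖ < 1) : evenProd x ≠ 0 := by
  have h := tprod_one_add_ne_zero_of_summable (f := fun j : ℕ ↦ -x ^ (2 * (j + 1)))
    (fun j ↦ by
      rw [← sub_eq_add_neg]
      exact one_sub_pow_ne_zero_of_norm_lt_one hx (by omega)) (summable_norm_even_pow hx)
  simpa [evenProd, sub_eq_add_neg] using h

lemma oddProd_neg_one_ne_zero (hx : ‖x‖ < 1) : oddProd x (-1) ≠ 0 := by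
  refine tprod_one_add_ne_zero_of_summable (fun j ↦ ?_) (summable_norm_odd_pow hx (-1))
  rw [neg_one_mul, ← sub_eq_add_neg]
  exact one_sub_pow_ne_zero_of_norm_lt_one hx (by omega)

lemma tendsto_evenPoch (hx : ‖x‖ < 1) : Tendsto (evenPoch x) atTop (𝓝 (evenProd x)) :=
  (multipliable_evenProd hx).hasProd.tendsto_prod_nat

lemma oddProd_neg (x z : ℂ) : oddProd (-x) z = oddProd x (-z) := by
  refine tprod_congr fun j ↦ ?_
  rw [Odd.neg_pow ⟨j, rfl⟩]
  ring

lemma oddProd_mul_oddProd_neg (hx : ‖x‖ < 1) (z : ℂ) :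
    oddProd x z * oddProd x (-z) = oddProd (x ^ 2) (-z ^ 2) := by
  unfold oddProd
  rw [← (multipliable_oddProd hx z).tprod_mul (multipliable_oddProd hx (-z))]
  refine tprod_congr fun j ↦ ?_
  rw [← pow_mul]
  ring

lemma evenProd_eq_mul (hx : ‖x‖ < 1) :
    evenProd x = oddProd (x ^ 2) (-1) * evenProd (x ^ 2) := by
  have hx2 : ‖x ^ 2‖ < 1 := by
    rw [norm_pow]; exact pow_lt_one₀ (norm_nonneg x) hx two_ne_zero
  have e1 : ∀ k : ℕ, 1 + -1 * (x ^ 2) ^ (2 * k + 1) = 1 - x ^ (2 * (2 * k + 1)) := fun k ↦ by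
    rw [← pow_mul]; ring
  have e2 : ∀ k : ℕ, 1 - (x ^ 2) ^ (2 * (k + 1)) = 1 - x ^ (2 * (2 * k + 1 + 1)) := fun k ↦ by
    rw [← pow_mul]; ring
  have h1 := multipliable_oddProd hx2 (-1)
  have h2 := multipliable_evenProd hx2
  simp only [e1] at h1
  simp only [e2] at h2
  simp only [evenProd, oddProd, e1, e2]
  exact (tprod_even_mul_odd (f := fun n : ℕ ↦ 1 - x ^ (2 * (n + 1))) h1 h2).symm

lemma evenPochInv_sub_one (hx : ‖x‖ < 1) (n : ℤ) :
    evenPochInv x (n - 1) = (1 - x ^ (2 * n)) * evenPochInv x n := by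
  rcases lt_trichotomy n 0 with h | rfl | h
  · rw [evenPochInv, evenPochInv, if_neg (by omega), if_neg (by omega), mul_zero]
  · simp [evenPochInv]
  · obtain ⟨m, rfl⟩ : ∃ m : ℕ, n = m + 1 := ⟨(n - 1).toNat, by omega⟩
    have h1 : 1 - x ^ (2 * (m + 1)) ≠ 0 := one_sub_pow_ne_zero_of_norm_lt_one hx (by omega)
    have h2 := evenPoch_ne_zero hx m
    have h3 : evenPoch x (m + 1) = evenPoch x m * (1 - x ^ (2 * (m + 1))) :=
      Finset.prod_range_succ _ _
    have h4 : x ^ (2 * ((m : ℤ) + 1)) = x ^ (2 * (m + 1)) := by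
      rw [← zpow_natCast]; push_cast; rfl
    rw [evenPochInv, evenPochInv, if_pos (by omega), if_pos (by omega), h4,
      show ((m : ℤ) + 1 - 1).toNat = m by omega, show ((m : ℤ) + 1).toNat = m + 1 by omega, h3]
    field_simp

lemma tendsto_evenPochInv (hx : ‖x‖ < 1) (k : ℤ) :
    Tendsto (fun N : ℕ ↦ evenPochInv x (N + k)) atTop (𝓝 (evenProd x)⁻¹) := by
  have h1 : Tendsto (fun n : ℕ ↦ (evenPoch x n)⁻¹) atTop (𝓝 (evenProd x)⁻¹) :=
    (tendsto_evenPoch hx).inv₀ (evenProd_ne_zero hx)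
  have h2 : Tendsto (fun N : ℕ ↦ ((N : ℤ) + k).toNat) atTop atTop := by
    refine tendsto_atTop.mpr fun b ↦ ?_
    filter_upwards [eventually_ge_atTop (b + k.natAbs)] with N hN
    omega
  refine (h1.comp h2).congr' ?_
  filter_upwards [eventually_ge_atTop k.natAbs] with N hN
  rw [evenPochInv, if_pos (by omega), Function.comp_apply]

lemma exists_norm_evenPochInv_le (hx : ‖x‖ < 1) : ∃ C : ℝ, ∀ n, ‖evenPochInv x n‖ ≤ C := by
  have h := Metric.isBounded_range_of_tendsto _
    ((tendsto_evenPoch hx).inv₀ (evenProd_ne_zero hx))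
  obtain ⟨C, hC⟩ := h.exists_norm_le
  refine ⟨C, fun n ↦ ?_⟩
  rw [evenPochInv]
  split_ifs
  · exact hC _ ⟨_, rfl⟩
  · simpa using (norm_nonneg _).trans (hC _ ⟨0, rfl⟩)

end Products

section TripleProduct

variable {x z : ℂ}

lemma summable_sq_zpow_mul_zpow (hx : ‖x‖ < 1) (hx0 : x ≠ 0) (hz : z ≠ 0) :
    Summable fun k : ℤ ↦ x ^ (k ^ 2) * z ^ k := by
  have hpi : (Real.pi : ℂ) ≠ 0 := Complex.ofReal_ne_zero.mpr Real.pi_ne_zero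
  have hτ : 0 < (log x / (Real.pi * I)).im := by
    have h : log x / (Real.pi * I) = ((Real.pi⁻¹ : ℝ) : ℂ) * (-(I * log x)) := by
      rw [div_eq_mul_inv, mul_inv, inv_I]; push_cast; ring
    rw [h, im_ofReal_mul, neg_im, I_mul_im, log_re]
    exact mul_pos (inv_pos.mpr Real.pi_pos)
      (neg_pos.mpr (Real.log_neg (norm_pos_iff.mpr hx0) hx))
  refine ((summable_jacobiTheta₂_term_iff (log z / (2 * Real.pi * I)) _).mpr hτ).congr fun k ↦ ?_
  have h1 : x ^ (k ^ 2) = exp ((k ^ 2 : ℤ) * log x) := by rw [exp_int_mul, exp_log hx0]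
  have h2 : z ^ k = exp (k * log z) := by rw [exp_int_mul, exp_log hz]
  rw [jacobiTheta₂_term, h1, h2, ← exp_add]
  congr 1
  push_cast
  field_simp
  ring

/-- A finite form of the Jacobi triple product identity. -/
lemma hasSum_finite_tripleProduct (hx : ‖x‖ < 1) (hx0 : x ≠ 0) (hz : z ≠ 0) (N : ℕ) :
    HasSum (fun k : ℤ ↦ evenPoch x (2 * N) * evenPochInv x (N + k) * evenPochInv x (N - k) *
      (x ^ (k ^ 2) * z ^ k))
      (∏ j ∈ Finset.range N, ((1 + z * x ^ (2 * j + 1)) * (1 + z⁻¹ * x ^ (2 * j + 1)))) := by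
  induction N with
  | zero =>
    convert hasSum_single (0 : ℤ) ?_ using 1
    · simp [evenPoch, evenPochInv]
    · intro k hk
      rcases lt_or_gt_of_ne hk with h | h
      · simp [evenPochInv, show ¬ 0 ≤ k by omega]
      · simp [evenPochInv, show ¬ k ≤ 0 by omega]
  | succ N ih =>
    have hl := ((Equiv.subRight (1 : ℤ)).hasSum_iff.mpr ih).mul_left (z * x ^ (2 * N + 1))
    have hr := ((Equiv.addRight (1 : ℤ)).hasSum_iff.mpr ih).mul_left (z⁻¹ * x ^ (2 * N + 1))
    have hm := ih.mul_left (1 + x ^ (4 * N + 2))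
    have hP : (1 + z * x ^ (2 * N + 1)) * (1 + z⁻¹ * x ^ (2 * N + 1)) =
        1 + x ^ (4 * N + 2) + z * x ^ (2 * N + 1) + z⁻¹ * x ^ (2 * N + 1) := by
      have : x ^ (4 * N + 2) = x ^ (2 * N + 1) * x ^ (2 * N + 1) := by ring
      rw [this]
      field_simp
      ring
    rw [Finset.prod_range_succ, hP, mul_comm (Finset.prod _ _), add_mul, add_mul]
    refine ((hm.add hl).add hr).congr_fun fun k ↦ ?_
    have hE : evenPoch x (2 * (N + 1)) =
        evenPoch x (2 * N) * (1 - x ^ (4 * N + 2)) * (1 - x ^ (4 * N + 4)) := by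
      rw [show 2 * (N + 1) = 2 * N + 1 + 1 by ring]
      simp only [evenPoch]
      rw [Finset.prod_range_succ, Finset.prod_range_succ]
      ring_nf
    have a1 := evenPochInv_sub_one hx (N + 1 + k)
    have a2 := evenPochInv_sub_one hx (N + k)
    have b1 := evenPochInv_sub_one hx (N + 1 - k)
    have b2 := evenPochInv_sub_one hx (N - k)
    rw [show (N : ℤ) + 1 + k - 1 = N + k by ring] at a1
    rw [show (N : ℤ) + 1 - k - 1 = N - k by ring] at b1
    simp only [Function.comp_apply, Equiv.subRight_apply, Equiv.coe_addRight, Nat.cast_add,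
      Nat.cast_one]
    rw [show (N : ℤ) + (k - 1) = N + k - 1 by ring, show (N : ℤ) - (k - 1) = N + 1 - k by ring,
      show (N : ℤ) + (k + 1) = N + 1 + k by ring, show (N : ℤ) - (k + 1) = N - k - 1 by ring,
      a2, b2, a1, b1, hE]
    have p1 : x ^ (2 * ((N : ℤ) + 1 + k)) = x ^ (2 * ((N : ℤ) + k)) * x ^ 2 := by
      rw [← zpow_natCast, ← zpow_add₀ hx0]; congr 1; push_cast; ring
    have p2 : x ^ (2 * ((N : ℤ) + 1 - k)) = x ^ (2 * ((N : ℤ) - k)) * x ^ 2 := by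
      rw [← zpow_natCast, ← zpow_add₀ hx0]; congr 1; push_cast; ring
    have p3 : x ^ (4 * N + 2) = x ^ (2 * ((N : ℤ) + k)) * x ^ (2 * ((N : ℤ) - k)) * x ^ 2 := by
      simp only [← zpow_natCast, ← zpow_add₀ hx0]; congr 1; push_cast; ring
    have p4 : x ^ (4 * N + 4) = x ^ (2 * ((N : ℤ) + k)) * x ^ (2 * ((N : ℤ) - k)) * x ^ 4 := by
      simp only [← zpow_natCast, ← zpow_add₀ hx0]; congr 1; push_cast; ring
    have p5 : z * x ^ (2 * N + 1) * (x ^ ((k - 1) ^ 2) * z ^ (k - 1)) =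
        x ^ (2 * ((N : ℤ) - k)) * x ^ 2 * (x ^ (k ^ 2) * z ^ k) := by
      have : x ^ (2 * N + 1) * x ^ ((k - 1) ^ 2) =
          x ^ (2 * ((N : ℤ) - k)) * x ^ 2 * x ^ (k ^ 2) := by
        simp only [← zpow_natCast, ← zpow_add₀ hx0]; congr 1; push_cast; ring
      rw [zpow_sub_one₀ hz]
      field_simp
      linear_combination this
    have p6 : z⁻¹ * x ^ (2 * N + 1) * (x ^ ((k + 1) ^ 2) * z ^ (k + 1)) =
        x ^ (2 * ((N : ℤ) + k)) * x ^ 2 * (x ^ (k ^ 2) * z ^ k) := by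
      have : x ^ (2 * N + 1) * x ^ ((k + 1) ^ 2) =
          x ^ (2 * ((N : ℤ) + k)) * x ^ 2 * x ^ (k ^ 2) := by
        simp only [← zpow_natCast, ← zpow_add₀ hx0]; congr 1; push_cast; ring
      rw [zpow_add_one₀ hz]
      field_simp
      linear_combination this
    rw [p1, p2, p3, p4]
    rw [p1] at a1
    rw [p2] at b1
    generalize evenPochInv x (N + 1 + k) = A at *
    generalize evenPochInv x (N + 1 - k) = B at *
    generalize x ^ (2 * ((N : ℤ) + k)) = P at *
    generalize x ^ (2 * ((N : ℤ) - k)) = Q at *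
    generalize evenPoch x (2 * N) = E at *
    linear_combination (-(E * ((1 - P) * ((1 - P * x ^ 2) * A)) * B)) * p5 -
      (E * A * ((1 - Q) * ((1 - Q * x ^ 2) * B))) * p6

/-- The Jacobi triple product identity. -/
theorem hasSum_tripleProduct (hx : ‖x‖ < 1) (hx0 : x ≠ 0) (hz : z ≠ 0) :
    HasSum (fun k : ℤ ↦ x ^ (k ^ 2) * z ^ k) (evenProd x * (oddProd x z * oddProd x z⁻¹)) := by
  have hs := summable_sq_zpow_mul_zpow hx hx0 hz
  have hE := evenProd_ne_zero hx
  obtain ⟨C, hC⟩ := exists_norm_evenPochInv_le hx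
  obtain ⟨D, hD⟩ := (Metric.isBounded_range_of_tendsto _ (tendsto_evenPoch hx)).exists_norm_le
  have hlim : Tendsto (fun N : ℕ ↦ ∑' k : ℤ, evenPoch x (2 * N) * evenPochInv x (N + k) *
      evenPochInv x (N - k) * (x ^ (k ^ 2) * z ^ k)) atTop
      (𝓝 (∑' k : ℤ, evenProd x * (evenProd x)⁻¹ * (evenProd x)⁻¹ * (x ^ (k ^ 2) * z ^ k))) := by
    refine tendsto_tsum_of_dominated_convergence (hs.norm.mul_left (D * C * C)) (fun k ↦ ?_)
      (Eventually.of_forall fun N k ↦ ?_)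
    · have h1 : Tendsto (fun N : ℕ ↦ evenPoch x (2 * N)) atTop (𝓝 (evenProd x)) :=
        (tendsto_evenPoch hx).comp (tendsto_id.const_mul_atTop' two_pos)
      have h2 : Tendsto (fun N : ℕ ↦ evenPochInv x (N - k)) atTop (𝓝 (evenProd x)⁻¹) := by
        simpa [sub_eq_add_neg] using tendsto_evenPochInv hx (-k)
      exact ((h1.mul (tendsto_evenPochInv hx k)).mul h2).mul_const _
    · rw [norm_mul, norm_mul, norm_mul]
      have hD' := hD _ ⟨2 * N, rfl⟩
      have hD0 := (norm_nonneg _).trans hD'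
      have hC0 := (norm_nonneg _).trans (hC 0)
      gcongr
      · exact hC _
      · exact hC _
  have hprod := ((multipliable_oddProd hx z).hasProd.mul
    (multipliable_oddProd hx z⁻¹).hasProd).tendsto_prod_nat
  have heq := tendsto_nhds_unique
    (hlim.congr fun N ↦ (hasSum_finite_tripleProduct hx hx0 hz N).tsum_eq) hprod
  rw [tsum_mul_left, mul_inv_cancel₀ hE, one_mul] at heq
  convert hs.hasSum using 1
  rw [oddProd, oddProd, ← heq, ← mul_assoc, mul_inv_cancel₀ hE, one_mul]

end TripleProduct

section ThetaIdentity

lemma neg_one_zpow_sub_eq_zero {m n : ℤ} (h : Even (n + m)) :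
    (-1 : ℂ) ^ m - (-1) ^ n = 0 := by
  rcases Int.even_or_odd m with hm | hm
  · rw [hm.neg_one_zpow, ((Int.even_add.mp h).mpr hm).neg_one_zpow, sub_self]
  · have hn : Odd n := by
      rw [← Int.not_even_iff_odd] at hm ⊢
      exact fun hn ↦ hm ((Int.even_add.mp h).mp hn)
    rw [hm.neg_one_zpow, hn.neg_one_zpow, sub_self]

/-- In Ramanujan's notation, `f(q, q⁵) φ(-q³) - f(-q, -q⁵) φ(q³) = 2 q f(-q², -q¹⁰)²`, with all
theta functions written as products. -/
lemma theta_mul_sub_theta_mul {q : ℂ} (hq : ‖q‖ < 1) (hq0 : q ≠ 0) :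
    evenProd (q ^ 3) ^ 2 *
      (oddProd (q ^ 3) (q ^ 2) * oddProd (q ^ 3) (q ^ 2)⁻¹ * oddProd (q ^ 3) (-1) ^ 2 -
        oddProd (q ^ 3) (-q ^ 2) * oddProd (q ^ 3) (-(q ^ 2)⁻¹) * oddProd (q ^ 3) 1 ^ 2) =
    2 * q * (evenProd (q ^ 6) *
      (oddProd (q ^ 6) (-(q ^ 2) ^ 2) * oddProd (q ^ 6) (-((q ^ 2)⁻¹) ^ 2))) ^ 2 := by
  have hq3 : ‖q ^ 3‖ < 1 := by
    rw [norm_pow]; exact pow_lt_one₀ (norm_nonneg q) hq (by norm_num)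
  have hq6 : ‖q ^ 6‖ < 1 := by
    rw [norm_pow]; exact pow_lt_one₀ (norm_nonneg q) hq (by norm_num)
  have h30 : q ^ 3 ≠ 0 := pow_ne_zero _ hq0
  have h60 : q ^ 6 ≠ 0 := pow_ne_zero _ hq0
  have h20 : q ^ 2 ≠ 0 := pow_ne_zero _ hq0
  have h40 : -(q ^ 2) ^ 2 ≠ 0 := neg_ne_zero.mpr (pow_ne_zero _ h20)
  have mul_hasSum : ∀ {f g : ℤ → ℂ} {s t : ℂ}, HasSum f s → HasSum g t →
      HasSum (fun p : ℤ × ℤ ↦ f p.1 * g p.2) (s * t) := fun hf hg ↦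
    hf.mul hg (summable_mul_of_summable_norm hf.summable.norm hg.summable.norm)
  have s1 := mul_hasSum (hasSum_tripleProduct hq3 h30 h20)
    (hasSum_tripleProduct hq3 h30 (neg_ne_zero.mpr one_ne_zero))
  have s2 := mul_hasSum (hasSum_tripleProduct hq3 h30 (neg_ne_zero.mpr h20))
    (hasSum_tripleProduct hq3 h30 one_ne_zero)
  have s3 := hasSum_tripleProduct hq6 h60 h40
  have s4 := (mul_hasSum s3 s3).mul_left (2 * q)
  have hinj : Function.Injective (fun p : ℤ × ℤ ↦ (-(p.1 + p.2 + 1), p.1 - p.2)) := by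
    rintro ⟨a, b⟩ ⟨a', b'⟩ h
    simp only [Prod.mk.injEq] at h ⊢
    omega
  have s5 := s1.sub s2
  rw [← hinj.hasSum_iff] at s5
  · have key := s5.unique (s4.congr_fun fun p ↦ ?_)
    · have i1 : (-1 : ℂ)⁻¹ = -1 := by norm_num
      have i2 : (-q ^ 2)⁻¹ = -(q ^ 2)⁻¹ := inv_neg
      have i3 : (-(q ^ 2) ^ 2)⁻¹ = -((q ^ 2)⁻¹) ^ 2 := by rw [inv_neg, inv_pow]
      rw [i1, i2, i3, inv_one] at key
      linear_combination key
    · obtain ⟨a, b⟩ := p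
      simp only [Function.comp_apply]
      rw [← neg_one_mul (q ^ 2), ← neg_one_mul ((q ^ 2) ^ 2), mul_zpow (-1) (q ^ 2),
        mul_zpow (-1) ((q ^ 2) ^ 2), mul_zpow (-1) ((q ^ 2) ^ 2), one_zpow]
      have n1 : (-1 : ℂ) ^ (-(a + b + 1)) = -((-1) ^ a * (-1) ^ b) := by
        rw [zpow_neg, ← inv_zpow, zpow_add₀ (by norm_num), zpow_add₀ (by norm_num)]
        norm_num
      have n2 : (-1 : ℂ) ^ (a - b) = (-1) ^ a * (-1) ^ b := by
        rw [sub_eq_add_neg, zpow_add₀ (by norm_num), zpow_neg, ← inv_zpow]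
        norm_num
      have n3 : (q ^ 3) ^ ((-(a + b + 1)) ^ 2) * (q ^ 2) ^ (-(a + b + 1)) *
          (q ^ 3) ^ ((a - b) ^ 2) =
          q * ((q ^ 6) ^ (a ^ 2) * ((q ^ 2) ^ 2) ^ a * ((q ^ 6) ^ (b ^ 2) * ((q ^ 2) ^ 2) ^ b)) := by
        have hz : ∀ (m : ℕ) (k : ℤ), (q ^ m) ^ k = q ^ (m * k) := fun m k ↦ by
          rw [← zpow_natCast, zpow_mul]
        rw [← pow_mul]
        simp only [hz]
        simp only [← zpow_add₀ hq0, ← zpow_one_add₀ hq0]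
        congr 1
        push_cast
        ring
      rw [n1, n2]
      linear_combination 2 * ((-1 : ℂ) ^ a * (-1) ^ b) * n3
  · rintro ⟨n, m⟩ hnm
    have he : Even (n + m) := by
      by_contra ho
      obtain ⟨k, hk⟩ := Int.not_even_iff_odd.mp ho
      refine hnm ⟨(m - k - 1, -k - 1), ?_⟩
      simp only [Prod.mk.injEq]
      omega
    have h0 := neg_one_zpow_sub_eq_zero he
    simp only
    rw [← neg_one_mul (q ^ 2), mul_zpow, one_zpow]
    linear_combination (q ^ 3) ^ (n ^ 2) * (q ^ 2) ^ n * (q ^ 3) ^ (m ^ 2) * h0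

end ThetaIdentity

section CubicContinuedFraction

lemma nome_ne_zero (τ : ℂ) : nome τ ≠ 0 := exp_ne_zero _

lemma norm_nome_lt_one {τ : ℂ} (hτ : 0 < τ.im) : ‖nome τ‖ < 1 :=
  UpperHalfPlane.norm_exp_two_pi_I_lt_one ⟨τ, hτ⟩

lemma nome_add_three_halves (τ : ℂ) : nome (τ + 3 / 2) = -nome τ := by
  rw [nome, nome, show 2 * Real.pi * I * (τ + 3 / 2) =
    2 * Real.pi * I * τ + Real.pi * I + 2 * Real.pi * I by ring, exp_periodic, exp_add, exp_pi_mul_I]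
  ring

lemma nome_two_mul (τ : ℂ) : nome (2 * τ) = nome τ ^ 2 := by
  rw [nome, nome, ← exp_nat_mul]
  congr 1
  push_cast
  ring

lemma c_eq_oddProd {τ : ℂ} (hτ : 0 < τ.im) :
    c τ = exp (2 * Real.pi * I * τ / 3) *
      (oddProd (nome τ ^ 3) (-nome τ ^ 2) * oddProd (nome τ ^ 3) (-(nome τ ^ 2)⁻¹) /
        oddProd (nome τ ^ 3) (-1) ^ 2) := by
  have hq := norm_nome_lt_one hτ
  have hq0 := nome_ne_zero τ
  set q := nome τ with hqdef
  have hq3 : ‖q ^ 3‖ < 1 := by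
    rw [norm_pow]; exact pow_lt_one₀ (norm_nonneg q) hq (by norm_num)
  rw [c, ← hqdef]
  congr 1
  have h1 := (multipliable_oddProd hq3 (-q ^ 2)).hasProd.mul
    (multipliable_oddProd hq3 (-(q ^ 2)⁻¹)).hasProd
  have h2 := (multipliable_oddProd hq3 (-1)).hasProd.mul (multipliable_oddProd hq3 (-1)).hasProd
  have h0 := oddProd_neg_one_ne_zero hq3
  rw [sq (oddProd (q ^ 3) (-1))]
  refine ((h1.div₀ h2 (mul_ne_zero h0 h0)).congr_fun fun n ↦ ?_).tprod_eq
  have e1 : 1 - q ^ (6 * (n + 1) - 1) = 1 + -q ^ 2 * (q ^ 3) ^ (2 * n + 1) := by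
    rw [show 6 * (n + 1) - 1 = 2 + 3 * (2 * n + 1) by omega, pow_add, pow_mul]; ring
  have e2 : 1 - q ^ (6 * (n + 1) - 5) = 1 + -(q ^ 2)⁻¹ * (q ^ 3) ^ (2 * n + 1) := by
    have : (q ^ 3) ^ (2 * n + 1) = q ^ 2 * q ^ (6 * (n + 1) - 5) := by
      rw [← pow_mul, ← pow_add]; congr 1; omega
    rw [this]
    field_simp
    ring
  have e3 : 1 - q ^ (6 * (n + 1) - 3) = 1 + -1 * (q ^ 3) ^ (2 * n + 1) := by
    rw [show 6 * (n + 1) - 3 = 3 * (2 * n + 1) by omega, pow_mul]; ring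
  rw [e1, e2, e3, sq (1 + -1 * (q ^ 3) ^ (2 * n + 1))]

lemma c₁_eq_oddProd {τ : ℂ} (hτ : 0 < τ.im) :
    c₁ τ = -(exp (2 * Real.pi * I * τ / 3) *
      (oddProd (nome τ ^ 3) (nome τ ^ 2) * oddProd (nome τ ^ 3) (nome τ ^ 2)⁻¹ /
        oddProd (nome τ ^ 3) 1 ^ 2)) := by
  have him : 0 < (τ + 3 / 2).im := by
    simpa using hτ
  have he : exp (2 * Real.pi * I * (τ + 3 / 2) / 3) = -exp (2 * Real.pi * I * τ / 3) := by
    rw [show 2 * Real.pi * I * (τ + 3 / 2) / 3 = 2 * Real.pi * I * τ / 3 + Real.pi * I by ring,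
      exp_add, exp_pi_mul_I]
    ring
  rw [c₁, c_eq_oddProd him, he, nome_add_three_halves, neg_sq, Odd.neg_pow (by decide),
    oddProd_neg, oddProd_neg, oddProd_neg, neg_neg, neg_neg, neg_neg, neg_mul]

lemma c_mul_c₁ {τ : ℂ} (hτ : 0 < τ.im) : c τ * c₁ τ = -c (2 * τ) := by
  have him : 0 < (2 * τ).im := by simpa using hτ
  have hq3 : ‖nome τ ^ 3‖ < 1 := by
    rw [norm_pow]; exact pow_lt_one₀ (norm_nonneg _) (norm_nome_lt_one hτ) (by norm_num)
  have he : exp (2 * Real.pi * I * (2 * τ) / 3) = exp (2 * Real.pi * I * τ / 3) ^ 2 := by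
    rw [← exp_nat_mul]; congr 1; push_cast; ring
  have h1 := oddProd_mul_oddProd_neg hq3 1
  have h2 := oddProd_mul_oddProd_neg hq3 (nome τ ^ 2)
  have h3 := oddProd_mul_oddProd_neg hq3 (nome τ ^ 2)⁻¹
  rw [one_pow] at h1
  rw [inv_pow] at h3
  rw [c_eq_oddProd hτ, c₁_eq_oddProd hτ, c_eq_oddProd him, nome_two_mul, he,
    show (nome τ ^ 2) ^ 3 = (nome τ ^ 3) ^ 2 by ring, ← h1, ← h2, ← h3]
  ring

lemma c_add_c₁ {τ : ℂ} (hτ : 0 < τ.im) : c τ + c₁ τ + 2 * c τ ^ 2 * c₁ τ ^ 2 = 0 := by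
  have hq := norm_nome_lt_one hτ
  have hq3 : ‖nome τ ^ 3‖ < 1 := by
    rw [norm_pow]; exact pow_lt_one₀ (norm_nonneg _) hq (by norm_num)
  have hr : nome τ = exp (2 * Real.pi * I * τ / 3) ^ 3 := by
    rw [nome, ← exp_nat_mul]; congr 1; push_cast; ring
  have hθ := theta_mul_sub_theta_mul hq (nome_ne_zero τ)
  have h1 := oddProd_mul_oddProd_neg hq3 1
  have h2 := oddProd_mul_oddProd_neg hq3 (nome τ ^ 2)
  have h3 := oddProd_mul_oddProd_neg hq3 (nome τ ^ 2)⁻¹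
  have hE := evenProd_eq_mul hq3
  have hE0 := evenProd_ne_zero hq3
  have hb := oddProd_neg_one_ne_zero hq3
  rw [show nome τ ^ 6 = (nome τ ^ 3) ^ 2 by ring, ← h2, ← h3] at hθ
  rw [one_pow] at h1
  rw [← h1] at hE
  have hb' : oddProd (nome τ ^ 3) 1 ≠ 0 := by
    intro h
    rw [h, zero_mul, zero_mul] at hE
    exact hE0 hE
  have hE2 : evenProd ((nome τ ^ 3) ^ 2) ≠ 0 := by
    intro h
    rw [h, mul_zero] at hE
    exact hE0 hE
  rw [c_eq_oddProd hτ, c₁_eq_oddProd hτ]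
  rw [hE] at hθ
  generalize exp (2 * Real.pi * I * τ / 3) = r at *
  generalize oddProd (nome τ ^ 3) (nome τ ^ 2) = a₁ at *
  generalize oddProd (nome τ ^ 3) (nome τ ^ 2)⁻¹ = a₂ at *
  generalize oddProd (nome τ ^ 3) (-nome τ ^ 2) = a₃ at *
  generalize oddProd (nome τ ^ 3) (-(nome τ ^ 2)⁻¹) = a₄ at *
  generalize oddProd (nome τ ^ 3) 1 = b₁ at *
  generalize oddProd (nome τ ^ 3) (-1) = b₂ at *
  generalize evenProd ((nome τ ^ 3) ^ 2) = E at *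
  have hθ' : (b₁ * b₂) ^ 2 * (a₁ * a₂ * b₂ ^ 2 - a₃ * a₄ * b₁ ^ 2) =
      2 * r ^ 3 * (a₁ * a₃ * (a₂ * a₄)) ^ 2 := by
    refine mul_left_cancel₀ (pow_ne_zero 2 hE2) ?_
    rw [hr] at hθ
    linear_combination hθ
  field_simp
  linear_combination -r * hθ'

end CubicContinuedFraction

/-- For `τ` in the upper half-plane:
(a) `c(τ) + c₁(τ) + 2c(τ)²c₁(τ)² = 0`;
(b) `2c(τ)²c₁(τ/2) + c₁(τ/2)² − c(τ) = 0`;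
moreover `c(τ)·c₁(τ) = −c(2τ)`. -/
theorem cubicCF_companion_relations (τ : ℂ) (hτ : 0 < τ.im) :
    c τ + c₁ τ + 2 * c τ ^ 2 * c₁ τ ^ 2 = 0 ∧
    2 * c τ ^ 2 * c₁ (τ / 2) + c₁ (τ / 2) ^ 2 - c τ = 0 ∧
    c τ * c₁ τ = -c (2 * τ) := by
  refine ⟨c_add_c₁ hτ, ?_, c_mul_c₁ hτ⟩
  have him : 0 < (τ / 2).im := by
    simpa using hτ
  have h1 := c_add_c₁ him
  have h2 : c τ = -(c (τ / 2) * c₁ (τ / 2)) := by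
    rw [c_mul_c₁ him, neg_neg, mul_div_cancel₀ τ two_ne_zero]
  rw [h2]
  linear_combination c₁ (τ / 2) * h1
end
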